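/- arXiv:1509.03372 — 2 statements merged into one kernel-verified Lean document; each statement's English description precedes it below -/
import Mathlib

section
/- Let a₁, a₂, a₃ ∈ ℝ³ be three points that are not collinear, i.e., the vectors a₁ − a₂ and a₁ − a₃ are linearly independent. Then the stacked 9×6 matrix 𝔾 = [G(a₁); G(a₂); G(a₃)] has full column rank 6; equivalently, if G(aⱼ)ξ = 0 for j = 1, 2, 3 and some ξ = (Ω, ν) ∈ ℝ⁶, then Ω = 0 and ν = 0. -/
open Matrix

noncomputable section

/-- The skew-symmetric matrix `x^×` with `x^× y = x × y`. -/
def skew (x : Fin 3 → ℝ) : Matrix (Fin 3) (Fin 3) ℝ :=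
  !![0, -x 2, x 1; x 2, 0, -x 0; -x 1, x 0, 0]

/-- The inverse `vex` of the map `x ↦ x^×` on skew-symmetric matrices. -/
def vex (A : Matrix (Fin 3) (Fin 3) ℝ) : Fin 3 → ℝ :=
  ![A 2 1, A 0 2, A 1 0]

/-- For `ξ = (Ω, ν) ∈ ℝ⁶`, the 4×4 matrix `ξ^∨ = [[Ω^×, ν],[0,0]]`. -/
def hat4 (Ω ν : Fin 3 → ℝ) : Matrix (Fin 3 ⊕ Fin 1) (Fin 3 ⊕ Fin 1) ℝ :=
  Matrix.fromBlocks (skew Ω) (Matrix.of fun i _ => ν i) 0 0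

/-- The 4×4 pose matrix `[[R, b],[0,1]]`. -/
def pose (R : Matrix (Fin 3) (Fin 3) ℝ) (b : Fin 3 → ℝ) :
    Matrix (Fin 3 ⊕ Fin 1) (Fin 3 ⊕ Fin 1) ℝ :=
  Matrix.fromBlocks R (Matrix.of fun i _ => b i) 0 1

/-- The adjoint matrix `Ad_g = [[R, 0],[b^× R, R]]` for `g = [[R,b],[0,1]]`. -/
def AdMat (R : Matrix (Fin 3) (Fin 3) ℝ) (b : Fin 3 → ℝ) :
    Matrix (Fin 3 ⊕ Fin 3) (Fin 3 ⊕ Fin 3) ℝ :=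
  Matrix.fromBlocks R 0 (skew b * R) R

/-- The 6×6 matrix `ad_ζ = [[w^×, 0],[v^×, w^×]]` for `ζ = (w, v)`. -/
def adMat (w v : Fin 3 → ℝ) : Matrix (Fin 3 ⊕ Fin 3) (Fin 3 ⊕ Fin 3) ℝ :=
  Matrix.fromBlocks (skew w) 0 (skew v) (skew w)

/-- The 3×6 matrix `G(a) = [a^× −I]`. -/
def Gmat (a : Fin 3 → ℝ) : Matrix (Fin 3) (Fin 3 ⊕ Fin 3) ℝ :=
  Matrix.of fun i => Sum.elim (fun j => skew a i j) (fun j => (-(1 : Matrix (Fin 3) (Fin 3) ℝ)) i j)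

/-- The stacked 9×6 matrix `𝔾 = [G(a₁); G(a₂); G(a₃)]`. -/
def stack3 (a₁ a₂ a₃ : Fin 3 → ℝ) :
    Matrix (Fin 3 ⊕ (Fin 3 ⊕ Fin 3)) (Fin 3 ⊕ Fin 3) ℝ :=
  Matrix.of (Sum.elim (fun r => Gmat a₁ r)
    (Sum.elim (fun r => Gmat a₂ r) (fun r => Gmat a₃ r)))

/-!
Each block satisfies `G(a)(Ω, ν) = a × Ω - ν`, so on the common kernel `aⱼ × Ω = ν` for all `j`.
Subtracting, `Ω` is annihilated by crossing with the independent vectors `a₁ - a₂` and `a₁ - a₃`,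
hence would be parallel to both if it were nonzero. So `Ω = 0`, and then `ν = a₁ × Ω = 0`.
-/

section CrossProduct

variable {F : Type*} [Field F]

lemma cross_eq_zero_iff_exists_smul_eq {v w : Fin 3 → F} (hv : v ≠ 0) :
    v ⨯₃ w = 0 ↔ ∃ c : F, c • v = w := by
  rw [← not_iff_not, ← ne_eq, crossProduct_ne_zero_iff_linearIndependent,
    LinearIndependent.pair_iff' hv, not_exists]

lemma eq_zero_of_cross_eq_zero {u v w : Fin 3 → F} (huv : LinearIndependent F ![u, v])
    (hu : u ⨯₃ w = 0) (hv : v ⨯₃ w = 0) : w = 0 := by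
  by_contra hw
  rw [← neg_cross, neg_eq_zero, cross_eq_zero_iff_exists_smul_eq hw] at hu hv
  obtain ⟨c, rfl⟩ := hu
  obtain ⟨d, rfl⟩ := hv
  have hparallel : (c • w) ⨯₃ (d • w) = 0 := by
    rw [map_smul, map_smul, LinearMap.smul_apply, cross_self, smul_zero, smul_zero]
  exact crossProduct_ne_zero_iff_linearIndependent.2 huv hparallel

lemma eq_zero_of_cross_eq_of_linearIndependent_sub {a₁ a₂ a₃ Ω ν : Fin 3 → F}
    (hind : LinearIndependent F ![a₁ - a₂, a₁ - a₃])
    (h₁ : a₁ ⨯₃ Ω = ν) (h₂ : a₂ ⨯₃ Ω = ν) (h₃ : a₃ ⨯₃ Ω = ν) : Ω = 0 ∧ ν = 0 := by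
  have h₁₂ : (a₁ - a₂) ⨯₃ Ω = 0 := by rw [LinearMap.map_sub₂, h₁, h₂, sub_self]
  have h₁₃ : (a₁ - a₃) ⨯₃ Ω = 0 := by rw [LinearMap.map_sub₂, h₁, h₃, sub_self]
  have hΩ : Ω = 0 := eq_zero_of_cross_eq_zero hind h₁₂ h₁₃
  exact ⟨hΩ, by rw [← h₁, hΩ, map_zero]⟩

end CrossProduct

lemma rank_eq_card_of_forall_mulVec_eq_zero {R m n : Type*} [CommRing R] [Nontrivial R]
    [Fintype n] {A : Matrix m n R} (hA : ∀ x, A *ᵥ x = 0 → x = 0) :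
    A.rank = Fintype.card n := by
  have hinj : Function.Injective A.mulVecLin :=
    LinearMap.ker_eq_bot.1 (ker_mulVecLin_eq_bot_iff.2 hA)
  rw [Matrix.rank, LinearMap.finrank_range_of_inj hinj, Module.finrank_fintype_fun_eq_card]

lemma skew_mulVec (a b : Fin 3 → ℝ) : skew a *ᵥ b = a ⨯₃ b := by
  rw [skew, cross_apply, mulVec_eq_sum]
  ext i
  fin_cases i <;> simp [Fin.sum_univ_three] <;> ring

lemma Gmat_eq_fromCols (a : Fin 3 → ℝ) : Gmat a = fromCols (skew a) (-1) := rfl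

lemma Gmat_mulVec_sumElim (a Ω ν : Fin 3 → ℝ) : Gmat a *ᵥ Sum.elim Ω ν = a ⨯₃ Ω - ν := by
  rw [Gmat_eq_fromCols, fromCols_mulVec_sumElim, skew_mulVec, neg_mulVec, one_mulVec,
    sub_eq_add_neg]

lemma Gmat_mulVec_sumElim_eq_zero_iff {a Ω ν : Fin 3 → ℝ} :
    Gmat a *ᵥ Sum.elim Ω ν = 0 ↔ a ⨯₃ Ω = ν := by
  rw [Gmat_mulVec_sumElim, sub_eq_zero]

lemma stack3_eq_fromRows (a₁ a₂ a₃ : Fin 3 → ℝ) :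
    stack3 a₁ a₂ a₃ = fromRows (Gmat a₁) (fromRows (Gmat a₂) (Gmat a₃)) := rfl

lemma stack3_mulVec_eq_zero_iff {a₁ a₂ a₃ : Fin 3 → ℝ} {ξ : Fin 3 ⊕ Fin 3 → ℝ} :
    stack3 a₁ a₂ a₃ *ᵥ ξ = 0 ↔ Gmat a₁ *ᵥ ξ = 0 ∧ Gmat a₂ *ᵥ ξ = 0 ∧ Gmat a₃ *ᵥ ξ = 0 := by
  simp only [stack3_eq_fromRows, fromRows_mulVec, ← Sum.elim_zero_zero, Sum.elim_eq_iff]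

/-- for three non-collinear points the stacked matrix
`𝔾 = [G(a₁); G(a₂); G(a₃)]` has full column rank 6; equivalently
`G(aⱼ)ξ = 0` for `j = 1,2,3` forces `ξ = 0`. -/
theorem stacked_full_column_rank (a₁ a₂ a₃ : Fin 3 → ℝ)
    (hind : LinearIndependent ℝ ![a₁ - a₂, a₁ - a₃]) :
    (stack3 a₁ a₂ a₃).rank = 6 ∧
      ∀ Ω ν : Fin 3 → ℝ,
        Gmat a₁ *ᵥ Sum.elim Ω ν = 0 →
        Gmat a₂ *ᵥ Sum.elim Ω ν = 0 →
        Gmat a₃ *ᵥ Sum.elim Ω ν = 0 →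
        Ω = 0 ∧ ν = 0 := by
  have hker : ∀ Ω ν : Fin 3 → ℝ, Gmat a₁ *ᵥ Sum.elim Ω ν = 0 → Gmat a₂ *ᵥ Sum.elim Ω ν = 0 →
      Gmat a₃ *ᵥ Sum.elim Ω ν = 0 → Ω = 0 ∧ ν = 0 := by
    intro Ω ν h₁ h₂ h₃
    rw [Gmat_mulVec_sumElim_eq_zero_iff] at h₁ h₂ h₃
    exact eq_zero_of_cross_eq_of_linearIndependent_sub hind h₁ h₂ h₃
  have hstack : ∀ ξ, stack3 a₁ a₂ a₃ *ᵥ ξ = 0 → ξ = 0 := by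
    intro ξ hξ
    obtain ⟨Ω, ν, rfl⟩ : ∃ Ω ν, Sum.elim Ω ν = ξ := ⟨_, _, Sum.elim_comp_inl_inr ξ⟩
    obtain ⟨h₁, h₂, h₃⟩ := stack3_mulVec_eq_zero_iff.1 hξ
    obtain ⟨rfl, rfl⟩ := hker Ω ν h₁ h₂ h₃
    exact Sum.elim_zero_zero
  exact ⟨rank_eq_card_of_forall_mulVec_eq_zero hstack, hker⟩
end
end

section
/- Let D ∈ ℝ^{3×β} have rank at least 2, let R ∈ SO(3), set L = Rᵀ D (perfect measurements), and let W ∈ ℝ^{β×β} be symmetric positive definite. Then for R̂ ∈ SO(3), the Wahba cost U_r(R̂) = ½ trace((D − R̂L)ᵀ(D − R̂L)W) vanishes if and only if R̂ = R. In particular, a rotation matrix Q ∈ SO(3) satisfying Q d = d for all columns d of a rank-≥2 matrix D must equal the identity. -/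
open Matrix

noncomputable section

/-! Writing `W = Bᴴ B`, the cost is half the squared Frobenius norm of `(D - R̂ L) Bᴴ`; it vanishes
exactly when `R̂` and `R` agree on `L W`, so `Rᴴ R̂` is a unitary matrix of determinant one fixing
`L W`. If `U` is such a matrix, fixing some `D` of corank at most one, then `A = U - 1` annihilates
`D`, so it has rank at most one and `1 = det U = 1 + tr A`. Unitarity of `U` says
`Aᴴ A = -(A + Aᴴ)`, whence `tr (Aᴴ A) = 0` and `A = 0`. -/

section RankOne

variable {K m n : Type*} [Field K] [Fintype n]

theorem exists_eq_vecMulVec_of_rank_le_one {A : Matrix m n K} (hA : A.rank ≤ 1) :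
    ∃ (u : m → K) (v : n → K), A = vecMulVec u v := by
  classical
  obtain ⟨u, hu⟩ := (Submodule.finrank_le_one_iff_isPrincipal A.mulVecLin.range).1 hA
  have col_mem_span (j : n) : A.col j ∈ Submodule.span K {u} := hu ▸ ⟨Pi.single j 1, by simp⟩
  choose v hv using fun j ↦ Submodule.mem_span_singleton.1 (col_mem_span j)
  refine ⟨u, v, ?_⟩
  ext i j
  rw [vecMulVec_apply, mul_comm]
  exact (congrFun (hv j) i).symm

theorem det_one_add_of_rank_le_one [DecidableEq n] {A : Matrix n n K} (hA : A.rank ≤ 1) :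
    (1 + A).det = 1 + A.trace := by
  obtain ⟨u, v, rfl⟩ := exists_eq_vecMulVec_of_rank_le_one hA
  rw [trace_vecMulVec, dotProduct_comm, vecMulVec_eq Unit,
    det_one_add_replicateCol_mul_replicateRow]

end RankOne

theorem conjTranspose_sub_one_mul_sub_one_of_mem_unitaryGroup {R n : Type*} [CommRing R]
    [StarRing R] [Fintype n] [DecidableEq n] {U : Matrix n n R} (hU : U ∈ unitaryGroup n R) :
    (U - 1)ᴴ * (U - 1) = -((U - 1) + (U - 1)ᴴ) := by
  have hUU : Uᴴ * U = 1 := mem_unitaryGroup_iff'.1 hU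
  rw [conjTranspose_sub, conjTranspose_one, sub_mul, mul_sub, hUU]
  noncomm_ring

section Unitary

variable {K m n : Type*} [Field K] [PartialOrder K] [StarRing K] [StarOrderedRing K]
  [Fintype m] [Fintype n] [DecidableEq n] {U V : Matrix n n K}

theorem eq_one_of_mem_unitaryGroup_of_rank_sub_one_le_one (hU : U ∈ unitaryGroup n K)
    (hdet : U.det = 1) (hrank : (U - 1).rank ≤ 1) : U = 1 := by
  have htrace : (U - 1).trace = 0 := by
    simpa [hdet] using det_one_add_of_rank_le_one hrank
  have hnorm : ((U - 1)ᴴ * (U - 1)).trace = 0 := by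
    rw [conjTranspose_sub_one_mul_sub_one_of_mem_unitaryGroup hU, trace_neg, trace_add,
      trace_conjTranspose, htrace, star_zero, add_zero, neg_zero]
  exact sub_eq_zero.1 (trace_conjTranspose_mul_self_eq_zero_iff.1 hnorm)

theorem eq_one_of_mem_unitaryGroup_of_mul_eq_self (hU : U ∈ unitaryGroup n K) (hdet : U.det = 1)
    {D : Matrix n m K} (hD : Fintype.card n ≤ D.rank + 1) (hUD : U * D = D) : U = 1 := by
  have hkill : (U - 1) * D = 0 := by
    rw [Matrix.sub_mul, hUD, Matrix.one_mul, sub_self]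
  have hsum : (U - 1).rank + D.rank ≤ Fintype.card n := rank_add_rank_le_card_of_mul_eq_zero hkill
  exact eq_one_of_mem_unitaryGroup_of_rank_sub_one_le_one hU hdet (by lia)

theorem eq_of_mem_unitaryGroup_of_mul_eq_mul (hU : U ∈ unitaryGroup n K)
    (hV : V ∈ unitaryGroup n K) (hdet : U.det = V.det) {D : Matrix n m K}
    (hD : Fintype.card n ≤ D.rank + 1) (hUV : U * D = V * D) : U = V := by
  have hVV : star V * V = 1 := mem_unitaryGroup_iff'.1 hV
  have hone : star V * U = 1 := by
    refine eq_one_of_mem_unitaryGroup_of_mul_eq_self (mul_mem (Unitary.star_mem hV) hU) ?_ hD ?_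
    · rw [det_mul, hdet, ← det_mul, hVV, det_one]
    · rw [Matrix.mul_assoc, hUV, ← Matrix.mul_assoc, hVV, Matrix.one_mul]
  calc U = V * star V * U := by rw [mem_unitaryGroup_iff.1 hV, Matrix.one_mul]
    _ = V := by rw [Matrix.mul_assoc, hone, Matrix.mul_one]

end Unitary

section Wahba

open scoped ComplexOrder

variable {𝕜 m n : Type*} [RCLike 𝕜] [Fintype m] [Fintype n]

open scoped MatrixOrder in
theorem trace_conjTranspose_mul_self_mul_eq_zero_iff {W : Matrix n n 𝕜} (hW : W.PosSemidef)
    {M : Matrix m n 𝕜} : (Mᴴ * M * W).trace = 0 ↔ M * W = 0 := by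
  classical
  obtain ⟨B, rfl⟩ := CStarAlgebra.nonneg_iff_eq_star_mul_self.1 hW.nonneg
  have htrace : (Mᴴ * M * (Bᴴ * B)).trace = ((M * Bᴴ)ᴴ * (M * Bᴴ)).trace := by
    rw [conjTranspose_mul, conjTranspose_conjTranspose, ← Matrix.mul_assoc, trace_mul_comm]
    simp only [Matrix.mul_assoc]
  rw [star_eq_conjTranspose, htrace, trace_conjTranspose_mul_self_eq_zero_iff,
    mul_conjTranspose_mul_self_eq_zero]

theorem wahba_unique_minimum_general [DecidableEq n] (D : Matrix n m 𝕜) (W : Matrix m m 𝕜)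
    (hW : W.PosSemidef) (hDW : Fintype.card n ≤ (D * W).rank + 1)
    (R : Matrix n n 𝕜) (hR : R ∈ unitaryGroup n 𝕜) (L : Matrix n m 𝕜) (hL : L = Rᴴ * D) :
    (∀ Rhat ∈ unitaryGroup n 𝕜, Rhat.det = R.det →
      ((1 / 2 : 𝕜) * ((D - Rhat * L)ᴴ * (D - Rhat * L) * W).trace = 0 ↔ Rhat = R)) ∧
    (∀ Q ∈ unitaryGroup n 𝕜, Q.det = 1 → Q * D = D → Q = 1) := by
  have hRL : R * L = D := by
    rw [hL, ← Matrix.mul_assoc, ← star_eq_conjTranspose, mem_unitaryGroup_iff.1 hR, Matrix.one_mul]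
  have hLW : Fintype.card n ≤ (L * W).rank + 1 := by
    rw [← hRL, Matrix.mul_assoc] at hDW
    grw [hDW, rank_mul_le_right]
  refine ⟨fun Rhat hRhat hdet ↦ ?_, fun Q hQ hdet hQD ↦ ?_⟩
  · have hcost : (1 / 2 : 𝕜) * ((D - Rhat * L)ᴴ * (D - Rhat * L) * W).trace = 0 ↔
        Rhat * (L * W) = R * (L * W) := by
      rw [mul_eq_zero_iff_left (by norm_num), trace_conjTranspose_mul_self_mul_eq_zero_iff hW,
        Matrix.sub_mul, sub_eq_zero, ← hRL, Matrix.mul_assoc, Matrix.mul_assoc, eq_comm]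
    rw [hcost]
    exact ⟨eq_of_mem_unitaryGroup_of_mul_eq_mul hRhat hR hdet hLW, fun h ↦ by rw [h]⟩
  · have hD : Fintype.card n ≤ D.rank + 1 := by grw [hDW, rank_mul_le_left]
    exact eq_one_of_mem_unitaryGroup_of_mul_eq_self hQ hdet hD hQD

end Wahba

/-- with perfect measurements `L = RᵀD` and `rank D ≥ 2`, the Wahba cost
vanishes iff `R̂ = R`; in particular a rotation fixing all columns of a rank-≥2 matrix `D`
is the identity. -/
theorem wahba_unique_minimum {β : ℕ} (D : Matrix (Fin 3) (Fin β) ℝ) (hD : 2 ≤ D.rank)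
    (R : Matrix (Fin 3) (Fin 3) ℝ) (hR : Rᵀ * R = 1) (hdet : R.det = 1)
    (W : Matrix (Fin β) (Fin β) ℝ) (hW : W.PosDef)
    (L : Matrix (Fin 3) (Fin β) ℝ) (hL : L = Rᵀ * D) :
    (∀ Rhat : Matrix (Fin 3) (Fin 3) ℝ, Rhatᵀ * Rhat = 1 → Rhat.det = 1 →
      ((1 / 2 : ℝ) * ((D - Rhat * L)ᵀ * (D - Rhat * L) * W).trace = 0 ↔ Rhat = R)) ∧
    (∀ Q : Matrix (Fin 3) (Fin 3) ℝ, Qᵀ * Q = 1 → Q.det = 1 → Q * D = D → Q = 1) := by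
  have hDW : (D * W).rank = D.rank :=
    rank_mul_eq_left_of_isUnit_det W D ((isUnit_iff_isUnit_det W).1 hW.isUnit)
  simpa [mem_unitaryGroup_iff', star_eq_conjTranspose, hdet] using
    wahba_unique_minimum_general D W hW.posSemidef (by simpa [hDW]) R
      (mem_unitaryGroup_iff'.2 hR) L hL
end
end
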